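/- arXiv:2102.01019 — 7 statements merged into one kernel-verified Lean document; each statement's English description precedes it below -/
import Mathlib

section
/- Let ε = e^(2πi/5). For all complex numbers z and w, the forms f, H and T are invariant under the icosahedral substitutions (z,w) ↦ (ε^3·z, ε^2·w) and (z,w) ↦ (−w, z); that is, f(ε^3·z, ε^2·w) = f(z,w), H(ε^3·z, ε^2·w) = H(z,w), T(ε^3·z, ε^2·w) = T(z,w), f(−w,z) = f(z,w), H(−w,z) = H(z,w), and T(−w,z) = T(z,w). -/
open Complex

/-- Klein's icosahedral vertex form. -/
noncomputable def kleinF (z w : ℂ) : ℂ := z * w * (z ^ 10 + 11 * z ^ 5 * w ^ 5 - w ^ 10)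

/-- Klein's icosahedral face form. -/
noncomputable def kleinH (z w : ℂ) : ℂ :=
  -(z ^ 20 + w ^ 20) + 228 * (z ^ 15 * w ^ 5 - z ^ 5 * w ^ 15) - 494 * z ^ 10 * w ^ 10

/-- Klein's icosahedral edge form. -/
noncomputable def kleinT (z w : ℂ) : ℂ :=
  (z ^ 30 + w ^ 30) + 522 * (z ^ 25 * w ^ 5 - z ^ 5 * w ^ 25)
    - 10005 * (z ^ 20 * w ^ 10 + z ^ 10 * w ^ 20)

/-- The forms f, H, T are invariant under the icosahedral substitutions
`(z,w) ↦ (ε³z, ε²w)` (with `ε = e^{2πi/5}`) and `(z,w) ↦ (−w, z)`. -/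
theorem icosahedral_invariance (z w : ℂ) :
    letI ε : ℂ := Complex.exp (2 * Real.pi * Complex.I / 5)
    kleinF (ε ^ 3 * z) (ε ^ 2 * w) = kleinF z w ∧
    kleinH (ε ^ 3 * z) (ε ^ 2 * w) = kleinH z w ∧
    kleinT (ε ^ 3 * z) (ε ^ 2 * w) = kleinT z w ∧
    kleinF (-w) z = kleinF z w ∧
    kleinH (-w) z = kleinH z w ∧
    kleinT (-w) z = kleinT z w := by
  have h5 : Complex.exp (2 * Real.pi * Complex.I / 5) ^ 5 = 1 := by
    rw [← Complex.exp_nat_mul, ← Complex.exp_two_pi_mul_I]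
    congr 1
    push_cast
    ring
  generalize Complex.exp (2 * Real.pi * Complex.I / 5) = ε at h5
  have hp : ∀ (m k : ℕ) (x : ℂ), (ε ^ m * x) ^ (5 * k) = x ^ (5 * k) := by
    intro m k x
    rw [mul_pow, ← pow_mul, show m * (5 * k) = 5 * (m * k) by ring, pow_mul, h5, one_pow, one_mul]
  have e1 := fun m x => hp m 1 x
  have e2 := fun m x => hp m 2 x
  have e3 := fun m x => hp m 3 x
  have e4 := fun m x => hp m 4 x
  have e5 := fun m x => hp m 5 x
  have e6 := fun m x => hp m 6 x
  norm_num only at e1 e2 e3 e4 e5 e6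
  have hm : ε ^ 3 * z * (ε ^ 2 * w) = z * w := by
    linear_combination z * w * h5
  refine ⟨?_, ?_, ?_, ?_, ?_, ?_⟩
  · simp only [kleinF, e1, e2, hm]
  · simp only [kleinH, e1, e2, e3, e4]
  · simp only [kleinT, e1, e2, e4, e5, e6]
  · simp only [kleinF]; ring
  · simp only [kleinH]; ring
  · simp only [kleinT]; ring
end

section
/- For all complex numbers z and w, the product of the five octahedral forms equals the icosahedral edge form: ∏_{ν=0}^{4} t_ν(z,w) = T(z,w). -/
open Complex Finset

/-- The five octahedral forms `t_ν`, with `ε = e^{2πi/5}`. -/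
noncomputable def octa (ν : ℕ) (z w : ℂ) : ℂ :=
  letI ε : ℂ := Complex.exp (2 * Real.pi * Complex.I / 5)
  ε ^ (3 * ν) * z ^ 6 + 2 * ε ^ (2 * ν) * z ^ 5 * w - 5 * ε ^ ν * z ^ 4 * w ^ 2
    - 5 * ε ^ (4 * ν) * z ^ 2 * w ^ 4 - 2 * ε ^ (3 * ν) * z * w ^ 5 + ε ^ (2 * ν) * w ^ 6

/-- The norm of `a ε + b ε² + c ε³ + d ε⁴`, by pairing conjugate factors. -/
theorem pair_one_four (e a b c d : ℂ) (h5 : e ^ 5 = 1) :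
    (a * e + b * e ^ 2 + c * e ^ 3 + d * e ^ 4) * (a * e ^ 4 + b * e ^ 3 + c * e ^ 2 + d * e)
      = (a ^ 2 + b ^ 2 + c ^ 2 + d ^ 2) + (a * b + b * c + c * d) * (e + e ^ 4)
        + (a * c + b * d + a * d) * (e ^ 2 + e ^ 3) := by
  linear_combination (a ^ 2 + b ^ 2 + c ^ 2 + d ^ 2 + (a * b + b * c + c * d) * e
    + (a * c + b * d) * e ^ 2 + a * d * e ^ 3) * h5

theorem quad_norm (s t x y v : ℂ) (h1 : s + t = -1) (h2 : s * t = -1) :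
    (x + y * s + v * t) * (x + y * t + v * s)
      = x ^ 2 - x * (y + v) + 3 * y * v - y ^ 2 - v ^ 2 := by
  linear_combination (x * (y + v) + y * v * (s + t - 1)) * h1
    + (y ^ 2 + v ^ 2 - 2 * y * v) * h2

theorem octa_eq (ν : ℕ) (z w e : ℂ) (he : Complex.exp (2 * Real.pi * Complex.I / 5) = e) :
    octa ν z w = (-5 * z ^ 4 * w ^ 2) * e ^ ν + (2 * z ^ 5 * w + w ^ 6) * e ^ (2 * ν)
      + (z ^ 6 - 2 * z * w ^ 5) * e ^ (3 * ν) + (-5 * z ^ 2 * w ^ 4) * e ^ (4 * ν) := by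
  simp only [octa, he]
  ring

/-- The product of the five octahedral forms equals the icosahedral edge form. -/
theorem prod_octa_eq_kleinT (z w : ℂ) :
    ∏ ν ∈ Finset.range 5, octa ν z w = kleinT z w := by
  have hp : IsPrimitiveRoot (Complex.exp (2 * Real.pi * Complex.I / 5)) 5 := by
    simpa using Complex.isPrimitiveRoot_exp 5 (by norm_num)
  obtain ⟨e, he⟩ : ∃ e, Complex.exp (2 * Real.pi * Complex.I / 5) = e := ⟨_, rfl⟩
  rw [he] at hp
  have h5 : e ^ 5 = 1 := hp.pow_eq_one
  have hs : 1 + e + e ^ 2 + e ^ 3 + e ^ 4 = 0 := by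
    have := hp.geom_sum_eq_zero (by norm_num)
    simpa [Finset.sum_range_succ] using this
  have red : ∀ k m : ℕ, e ^ (5 * k + m) = e ^ m := fun k m => by
    rw [pow_add, pow_mul, h5, one_pow, one_mul]
  have e6 : e ^ 6 = e := by simpa using red 1 1
  have e8 : e ^ 8 = e ^ 3 := red 1 3
  have e9 : e ^ 9 = e ^ 4 := red 1 4
  have e12 : e ^ 12 = e ^ 2 := red 2 2
  have e16 : e ^ 16 = e := by simpa using red 3 1
  simp only [Finset.prod_range_succ, Finset.prod_range_zero, octa_eq _ z w e he]
  norm_num only [pow_zero, pow_one, mul_one, one_mul, e6, e8, e9, e12, e16]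
  generalize ha : -5 * z ^ 4 * w ^ 2 = a
  generalize hb : 2 * z ^ 5 * w + w ^ 6 = b
  generalize hc : z ^ 6 - 2 * z * w ^ 5 = c
  generalize hd : -5 * z ^ 2 * w ^ 4 = d
  have p1 := pair_one_four e a b c d h5
  have p2 := pair_one_four (e ^ 2) a b c d (by rw [← pow_mul]; exact red 2 0)
  have q1 : (e ^ 2) ^ 2 = e ^ 4 := by ring
  have q2 : (e ^ 2) ^ 3 = e := by rw [← pow_mul]; exact e6
  have q3 : (e ^ 2) ^ 4 = e ^ 3 := by rw [← pow_mul]; exact e8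
  rw [q1, q2, q3] at p2
  have n := quad_norm (e + e ^ 4) (e ^ 2 + e ^ 3) (a ^ 2 + b ^ 2 + c ^ 2 + d ^ 2)
    (a * b + b * c + c * d) (a * c + b * d + a * d) (by linear_combination hs)
    (by linear_combination hs + (e + e ^ 2) * h5)
  have key : (a + b + c + d) * ((a ^ 2 + b ^ 2 + c ^ 2 + d ^ 2) ^ 2
      - (a ^ 2 + b ^ 2 + c ^ 2 + d ^ 2) * ((a * b + b * c + c * d) + (a * c + b * d + a * d))
      + 3 * (a * b + b * c + c * d) * (a * c + b * d + a * d) - (a * b + b * c + c * d) ^ 2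
      - (a * c + b * d + a * d) ^ 2) = kleinT z w := by
    subst ha hb hc hd
    unfold kleinT
    ring
  rw [← key, ← n, show e ^ 2 + e ^ 3 = e ^ 2 + e ^ 3 from rfl]
  have p2' : (a * e ^ 2 + b * e ^ 4 + c * e + d * e ^ 3) * (a * e ^ 3 + b * e + c * e ^ 4 + d * e ^ 2)
      = (a ^ 2 + b ^ 2 + c ^ 2 + d ^ 2) + (a * b + b * c + c * d) * (e ^ 2 + e ^ 3)
        + (a * c + b * d + a * d) * (e + e ^ 4) := by
    linear_combination p2
  rw [← p1, ← p2']
  ring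
end

section
/- Let h₁, h₂, η₁, η₂, p, q, α, β, γ be complex numbers with η₁ ≠ 0 and η₂ ≠ 0. Assume the Heymann resolvent equations h₁·η₁^5 − 10·η₁^2 + 15·η₁ − 6 = 0 and h₂·η₂^5 − 10·η₂^2 + 15·η₂ − 6 = 0, and the relation η₁·η₂ = η₁ + η₂. Then h₁·h₂·[ (p·η₁ + q·η₂)^5 + 5α·(p·η₁ + q·η₂)^2 + 5β·(p·η₁ + q·η₂) + γ ] = M·η₁^2 + N·η₂^2 + P·η₁ + Q·η₂ + R, where M = 5p^2·(2h₂p^3 + 2h₁q^3 + α·h₁h₂), N = 5q^2·(2h₁q^3 + 2h₂p^3 + α·h₁h₂), P = 5p·(−3h₂p^4 + 10h₂p^3q + 6h₁pq^3 + h₁q^4 + 2α·h₁h₂·q + β·h₁h₂), Q = 5q·(−3h₁q^4 + 10h₁q^3p + 6h₂qp^3 + h₂p^4 + 2α·h₁h₂·p + β·h₁h₂), and R = 6·(h₂p^5 − 5h₂p^4q + 10h₂q^2p^3 + 10h₁p^2q^3 − 5h₁pq^4 + h₁q^5) + γ·h₁h₂. -/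
/-- Reduction of `h·a⁴·b` and `h·a³·b²` by the resolvent and the product-sum relation. -/
theorem heymann_aux (h a b : ℂ) (ha : a ≠ 0)
    (hr : h * a ^ 5 - 10 * a ^ 2 + 15 * a - 6 = 0) (hp : a * b = a + b) :
    h * a ^ 4 * b = 10 * a + b - 6 ∧ h * a ^ 3 * b ^ 2 = b ^ 2 + 3 * b + 6 := by
  have e1 : h * a ^ 4 * b = 10 * a + b - 6 := by
    apply mul_left_cancel₀ ha
    linear_combination b * hr + (10 * a - 6) * hp
  refine ⟨e1, ?_⟩
  apply mul_left_cancel₀ ha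
  linear_combination b * e1 + (6 - b) * hp

/-- Substituting `y = p·η₁ + q·η₂` into the principal quintic yields the
simultaneous resolvent `M·η₁² + N·η₂² + P·η₁ + Q·η₂ + R`. -/
theorem heymann_substitution (h₁ h₂ η₁ η₂ p q α β γ : ℂ)
    (hη₁ : η₁ ≠ 0) (hη₂ : η₂ ≠ 0)
    (hres₁ : h₁ * η₁ ^ 5 - 10 * η₁ ^ 2 + 15 * η₁ - 6 = 0)
    (hres₂ : h₂ * η₂ ^ 5 - 10 * η₂ ^ 2 + 15 * η₂ - 6 = 0)
    (hprod : η₁ * η₂ = η₁ + η₂) :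
    letI M : ℂ := 5 * p ^ 2 * (2 * h₂ * p ^ 3 + 2 * h₁ * q ^ 3 + α * h₁ * h₂)
    letI N : ℂ := 5 * q ^ 2 * (2 * h₁ * q ^ 3 + 2 * h₂ * p ^ 3 + α * h₁ * h₂)
    letI P : ℂ := 5 * p * (-3 * h₂ * p ^ 4 + 10 * h₂ * p ^ 3 * q + 6 * h₁ * p * q ^ 3
      + h₁ * q ^ 4 + 2 * α * h₁ * h₂ * q + β * h₁ * h₂)
    letI Q : ℂ := 5 * q * (-3 * h₁ * q ^ 4 + 10 * h₁ * q ^ 3 * p + 6 * h₂ * q * p ^ 3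
      + h₂ * p ^ 4 + 2 * α * h₁ * h₂ * p + β * h₁ * h₂)
    letI R : ℂ := 6 * (h₂ * p ^ 5 - 5 * h₂ * p ^ 4 * q + 10 * h₂ * q ^ 2 * p ^ 3
      + 10 * h₁ * p ^ 2 * q ^ 3 - 5 * h₁ * p * q ^ 4 + h₁ * q ^ 5) + γ * h₁ * h₂
    h₁ * h₂ * ((p * η₁ + q * η₂) ^ 5 + 5 * α * (p * η₁ + q * η₂) ^ 2
      + 5 * β * (p * η₁ + q * η₂) + γ)
      = M * η₁ ^ 2 + N * η₂ ^ 2 + P * η₁ + Q * η₂ + R := by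
  obtain ⟨e1, e2⟩ := heymann_aux h₁ η₁ η₂ hη₁ hres₁ hprod
  obtain ⟨f1, f2⟩ := heymann_aux h₂ η₂ η₁ hη₂ hres₂ (by linear_combination hprod)
  linear_combination h₂ * p ^ 5 * hres₁ + h₁ * q ^ 5 * hres₂ + 5 * h₂ * p ^ 4 * q * e1
    + 10 * h₂ * p ^ 3 * q ^ 2 * e2 + 5 * h₁ * q ^ 4 * p * f1 + 10 * h₁ * q ^ 3 * p ^ 2 * f2
    + 10 * α * h₁ * h₂ * p * q * hprod
end

section
/- Let h₁, h₂, p, q be complex numbers with h₁ ≠ 0, h₂ ≠ 0 and h₁ + h₂ = 1, and define α = −2·(p^3/h₁ + q^3/h₂), β = 3·(p^3·(p−2q)/h₁ − q^3·(2p−q)/h₂), γ = −6·(p^3·(p^2−5pq+10q^2)/h₁ + q^3·(10p^2−5pq+q^2)/h₂). Then r = (p−q)^2 satisfies the central quadratic relation (α^4 + α·β·γ − β^3)·(12r)^2 − (2·α^3·γ + 11·α^2·β^2 + β·γ^2)·(12r) + (α·γ − 8·β^2)^2 = 0. -/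
set_option maxHeartbeats 4000000 in
/-- The central quadratic relation satisfied by `r = (p−q)²`. -/
theorem heymann_central_quadratic (h₁ h₂ p q : ℂ) (hh₁ : h₁ ≠ 0) (hh₂ : h₂ ≠ 0)
    (hsum : h₁ + h₂ = 1) :
    letI α : ℂ := -2 * (p ^ 3 / h₁ + q ^ 3 / h₂)
    letI β : ℂ := 3 * (p ^ 3 * (p - 2 * q) / h₁ - q ^ 3 * (2 * p - q) / h₂)
    letI γ : ℂ := -6 * (p ^ 3 * (p ^ 2 - 5 * p * q + 10 * q ^ 2) / h₁
      + q ^ 3 * (10 * p ^ 2 - 5 * p * q + q ^ 2) / h₂)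
    letI r : ℂ := (p - q) ^ 2
    (α ^ 4 + α * β * γ - β ^ 3) * (12 * r) ^ 2
      - (2 * α ^ 3 * γ + 11 * α ^ 2 * β ^ 2 + β * γ ^ 2) * (12 * r)
      + (α * γ - 8 * β ^ 2) ^ 2 = 0 := by
  obtain rfl : h₂ = 1 - h₁ := by linear_combination hsum
  field_simp
  ring
end

section
/- Let h₁, h₂, p, q be complex numbers with h₁ ≠ 0, h₂ ≠ 0 and h₁ + h₂ = 1, and define α = −2·(p^3/h₁ + q^3/h₂), β = 3·(p^3·(p−2q)/h₁ − q^3·(2p−q)/h₂), γ = −6·(p^3·(p^2−5pq+10q^2)/h₁ + q^3·(10p^2−5pq+q^2)/h₂), and r = (p−q)^2. Then h₁·h₂·(12·(α·γ − β^2)·r − γ^2) = 432·β·p^3·q^3; in particular, if 12·(α·γ − β^2)·r − γ^2 ≠ 0, then h₁·h₂ = 432·β·p^3·q^3 / (12·(α·γ − β^2)·r − γ^2). -/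
/-- The Heymann product relation `h₁·h₂·(12·(αγ − β²)·r − γ²) = 432·β·p³·q³`. -/
theorem heymann_product_relation (h₁ h₂ p q : ℂ) (hh₁ : h₁ ≠ 0) (hh₂ : h₂ ≠ 0)
    (hsum : h₁ + h₂ = 1) :
    letI α : ℂ := -2 * (p ^ 3 / h₁ + q ^ 3 / h₂)
    letI β : ℂ := 3 * (p ^ 3 * (p - 2 * q) / h₁ - q ^ 3 * (2 * p - q) / h₂)
    letI γ : ℂ := -6 * (p ^ 3 * (p ^ 2 - 5 * p * q + 10 * q ^ 2) / h₁
      + q ^ 3 * (10 * p ^ 2 - 5 * p * q + q ^ 2) / h₂)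
    letI r : ℂ := (p - q) ^ 2
    h₁ * h₂ * (12 * (α * γ - β ^ 2) * r - γ ^ 2) = 432 * β * p ^ 3 * q ^ 3 ∧
    (12 * (α * γ - β ^ 2) * r - γ ^ 2 ≠ 0 →
      h₁ * h₂ = 432 * β * p ^ 3 * q ^ 3 / (12 * (α * γ - β ^ 2) * r - γ ^ 2)) := by
  refine (fun key => ⟨key, fun hne => (eq_div_iff hne).mpr key⟩) ?_
  have e : h₂ = 1 - h₁ := by linear_combination hsum
  subst e
  field_simp
  ring
end

section
/- Let z, w be complex numbers and set α = −z·w^2, β = z^3·w, γ = −(z^5 − w^5) (Euler's parametrization). Then: (i) α^4 + α·β·γ − β^3 = 0, i.e. the leading coefficient of the central quadratic relation vanishes; and (ii) the polynomial identity (2·α^3·γ + 11·α^2·β^2 + β·γ^2)·w^4·(7·z^5 + w^5)^2 = (α·γ − 8·β^2)^2·f(z,w) holds. Consequently, if f(z,w) ≠ 0, then r = w^4·(7·z^5 + w^5)^2/(12·f(z,w)) satisfies (α^4 + α·β·γ − β^3)·(12r)^2 − (2·α^3·γ + 11·α^2·β^2 + β·γ^2)·(12r) + (α·γ − 8·β^2)^2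 = 0. -/
/-- Under Euler's parametrization the central quadratic relation becomes linear,
and `r = w⁴·(7z⁵ + w⁵)²/(12·f)` solves it. -/
theorem euler_central_quadratic (z w : ℂ) :
    letI α : ℂ := -(z * w ^ 2)
    letI β : ℂ := z ^ 3 * w
    letI γ : ℂ := -(z ^ 5 - w ^ 5)
    (α ^ 4 + α * β * γ - β ^ 3 = 0) ∧
    ((2 * α ^ 3 * γ + 11 * α ^ 2 * β ^ 2 + β * γ ^ 2) * (w ^ 4 * (7 * z ^ 5 + w ^ 5) ^ 2)
      = (α * γ - 8 * β ^ 2) ^ 2 * kleinF z w) ∧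
    (kleinF z w ≠ 0 →
      letI r : ℂ := w ^ 4 * (7 * z ^ 5 + w ^ 5) ^ 2 / (12 * kleinF z w)
      (α ^ 4 + α * β * γ - β ^ 3) * (12 * r) ^ 2
        - (2 * α ^ 3 * γ + 11 * α ^ 2 * β ^ 2 + β * γ ^ 2) * (12 * r)
        + (α * γ - 8 * β ^ 2) ^ 2 = 0) := by
  have h1 : (-(z * w ^ 2)) ^ 4 + (-(z * w ^ 2)) * (z ^ 3 * w) * (-(z ^ 5 - w ^ 5))
      - (z ^ 3 * w) ^ 3 = 0 := by ring
  have h2 : 2 * (-(z * w ^ 2)) ^ 3 * (-(z ^ 5 - w ^ 5))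
      + 11 * (-(z * w ^ 2)) ^ 2 * (z ^ 3 * w) ^ 2
      + (z ^ 3 * w) * (-(z ^ 5 - w ^ 5)) ^ 2 = z ^ 2 * kleinF z w := by
    unfold kleinF; ring
  have h3 : ((-(z * w ^ 2)) * (-(z ^ 5 - w ^ 5)) - 8 * (z ^ 3 * w) ^ 2) ^ 2
      = z ^ 2 * (w ^ 4 * (7 * z ^ 5 + w ^ 5) ^ 2) := by ring
  refine ⟨h1, ?_, fun hf => ?_⟩
  · rw [h2, h3]; ring
  · rw [h1, h2, h3]
    field_simp
    ring
end

section
/- Let z, w be complex numbers with f(z,w) ≠ 0, set α = −z·w^2, β = z^3·w, γ = −(z^5 − w^5) (Euler's parametrization), r = w^4·(7·z^5 + w^5)^2/(12·f(z,w)) and s = z^3·(−z^10 + 39·z^5·w^5 + 26·w^10)/(6·f(z,w)). Then 1728·27·β·(s^2 − r)^3·f(z,w)^5 = H(z,w)^3·(12·(α·γ − β^2)·r − γ^2). In particular, if 12·(α·γ − β^2)·r − γ^2 ≠ 0, then the icosahedral parameter satisfies 4·(432·β·((s^2 − r)/4)^3/(12·(α·γ − β^2)·r − γ^2)) = H(z,w)^3/(1728·f(z,w)^5).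 -/
/-- Under Euler's parametrization, `4·h₁·h₂` is the icosahedral parameter
`J = H³/(1728·f⁵)`. -/
theorem euler_icosahedral_parameter (z w : ℂ) (hf : kleinF z w ≠ 0) :
    letI α : ℂ := -(z * w ^ 2)
    letI β : ℂ := z ^ 3 * w
    letI γ : ℂ := -(z ^ 5 - w ^ 5)
    letI r : ℂ := w ^ 4 * (7 * z ^ 5 + w ^ 5) ^ 2 / (12 * kleinF z w)
    letI s : ℂ := z ^ 3 * (-z ^ 10 + 39 * z ^ 5 * w ^ 5 + 26 * w ^ 10) / (6 * kleinF z w)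
    (1728 * 27 * β * (s ^ 2 - r) ^ 3 * kleinF z w ^ 5
      = kleinH z w ^ 3 * (12 * (α * γ - β ^ 2) * r - γ ^ 2)) ∧
    (12 * (α * γ - β ^ 2) * r - γ ^ 2 ≠ 0 →
      4 * (432 * β * ((s ^ 2 - r) / 4) ^ 3 / (12 * (α * γ - β ^ 2) * r - γ ^ 2))
        = kleinH z w ^ 3 / (1728 * kleinF z w ^ 5)) := by
  have h1 : (z ^ 3 * (-z ^ 10 + 39 * z ^ 5 * w ^ 5 + 26 * w ^ 10) / (6 * kleinF z w)) ^ 2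
      - w ^ 4 * (7 * z ^ 5 + w ^ 5) ^ 2 / (12 * kleinF z w)
      = kleinH z w * (-z ^ 6 - 3 * z * w ^ 5) / (36 * kleinF z w ^ 2) := by
    have e : (z ^ 3 * (-z ^ 10 + 39 * z ^ 5 * w ^ 5 + 26 * w ^ 10)) ^ 2
        - 3 * kleinF z w * (w ^ 4 * (7 * z ^ 5 + w ^ 5) ^ 2)
        = kleinH z w * (-z ^ 6 - 3 * z * w ^ 5) := by
      unfold kleinF kleinH
      ring
    rw [← e]
    generalize kleinF z w = f at *
    field_simp
    ring
  have h2 : 12 * (-(z * w ^ 2) * -(z ^ 5 - w ^ 5) - (z ^ 3 * w) ^ 2)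
      * (w ^ 4 * (7 * z ^ 5 + w ^ 5) ^ 2 / (12 * kleinF z w)) - (-(z ^ 5 - w ^ 5)) ^ 2
      = z ^ 3 * w * (-z ^ 6 - 3 * z * w ^ 5) ^ 3 / kleinF z w := by
    have e : (-(z * w ^ 2) * -(z ^ 5 - w ^ 5) - (z ^ 3 * w) ^ 2)
        * (w ^ 4 * (7 * z ^ 5 + w ^ 5) ^ 2) - (-(z ^ 5 - w ^ 5)) ^ 2 * kleinF z w
        = z ^ 3 * w * (-z ^ 6 - 3 * z * w ^ 5) ^ 3 := by
      unfold kleinF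
      ring
    rw [← e]
    generalize kleinF z w = f at *
    field_simp
  rw [h1, h2]
  generalize kleinF z w = f at *
  generalize kleinH z w = H at *
  clear h1 h2
  generalize -z ^ 6 - 3 * z * w ^ 5 = K
  refine ⟨?_, fun hD => ?_⟩
  · field_simp
    ring
  · have hb : z ^ 3 * w ≠ 0 := by
      intro h
      apply hD
      rw [h]
      simp
    have hK : K ≠ 0 := by
      intro h
      apply hD
      rw [h]
      simp
    generalize z ^ 3 * w = b at *
    field_simp
    ring
end
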